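/- For all n ≥ 1 and k ≥ 1, the number of up-down permutations π of [n+1] with exactly k extreme elements equals the number of cycle-up-down permutations of [n] with exactly k cycles. -/

import Mathlib

open Equiv Finset

/-- `π` is an up-down permutation of `[n]` in one-line notation (0-indexed):
`π 0 < π 1 > π 2 < π 3 > ⋯`. -/
def IsUpDownPerm {n : ℕ} (π : Equiv.Perm (Fin n)) : Prop :=
  ∀ i j : Fin n, (j : ℕ) = (i : ℕ) + 1 →
    (((i : ℕ) % 2 = 0 → π i < π j) ∧ ((i : ℕ) % 2 = 1 → π j < π i))

/-- The Euler number `E n`: the number of up-down permutations of `[n]`. -/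
noncomputable def eulerE (n : ℕ) : ℕ :=
  Nat.card {π : Equiv.Perm (Fin n) // IsUpDownPerm π}

/-- The length of the cycle of `π` containing `x` (fixed points give length `1`). -/
noncomputable def cycLen {n : ℕ} (π : Equiv.Perm (Fin n)) (x : Fin n) : ℕ :=
  Function.minimalPeriod (⇑π) x

/-- `x` is the smallest element of its cycle of `π`. -/
def IsOrbitMin {n : ℕ} (π : Equiv.Perm (Fin n)) (x : Fin n) : Prop :=
  ∀ k : ℕ, x ≤ (π ^ k) x

/-- The cyclic representation `x, π x, π² x, …` (of length `cycLen π x`) of the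
cycle of `π` containing `x` has the up-down pattern `x < π x > π² x < ⋯`. -/
def CycleUpDownAt {n : ℕ} (π : Equiv.Perm (Fin n)) (x : Fin n) : Prop :=
  ∀ i : ℕ, i + 1 < cycLen π x →
    ((i % 2 = 0 → (π ^ i) x < (π ^ (i + 1)) x) ∧
     (i % 2 = 1 → (π ^ (i + 1)) x < (π ^ i) x))

/-- `π` is cycle-up-down: every cycle, written in standard form
(starting at its smallest element), is up-down. -/
def IsCUD {n : ℕ} (π : Equiv.Perm (Fin n)) : Prop :=
  ∀ x : Fin n, IsOrbitMin π x → CycleUpDownAt π x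

/-- The number of cycles of `π` (fixed points included), counted via the
smallest elements of the cycles. -/
noncomputable def cycleCount {n : ℕ} (π : Equiv.Perm (Fin n)) : ℕ :=
  Nat.card {x : Fin n // IsOrbitMin π x}

/-- The number of cycles of `π` of even length. -/
noncomputable def evenCycleCount {n : ℕ} (π : Equiv.Perm (Fin n)) : ℕ :=
  Nat.card {x : Fin n // IsOrbitMin π x ∧ Even (cycLen π x)}

/-- The number of cycles of `π` of odd length. -/
noncomputable def oddCycleCount {n : ℕ} (π : Equiv.Perm (Fin n)) : ℕ :=
  Nat.card {x : Fin n // IsOrbitMin π x ∧ Odd (cycLen π x)}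

/-- The number of excedances of `π`. -/
noncomputable def excCount {n : ℕ} (π : Equiv.Perm (Fin n)) : ℕ :=
  Nat.card {i : Fin n // i < π i}

/-- The number of left-to-right minima of `π` (in one-line notation). -/
noncomputable def lrmCount {n : ℕ} (π : Equiv.Perm (Fin n)) : ℕ :=
  Nat.card {i : Fin n // ∀ j : Fin n, j < i → π i < π j}

/-- The number of extreme elements of `π`: entries in position `≥ 2`
(0-indexed: position `≥ 1`) that are left-to-right minima or maxima. -/
noncomputable def extrCount {n : ℕ} (π : Equiv.Perm (Fin n)) : ℕ :=
  Nat.card {i : Fin n // (i : ℕ) ≠ 0 ∧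
    ((∀ j : Fin n, j < i → π i < π j) ∨ (∀ j : Fin n, j < i → π j < π i))}

/-- Auxiliary (fuel-based) computation of the length of the `s`-driven
min/max subsequence of a list: at step `j` (0-indexed) pick the minimum of the
remaining list if `s j = true`, its maximum if `s j = false`, and continue with
the part of the list strictly to the right of the picked entry. -/
def msLenAux : ℕ → (ℕ → Bool) → List ℕ → ℕ
  | 0, _, _ => 0
  | _, _, [] => 0
  | fuel + 1, s, a :: t =>
      let l := a :: t
      let v := if s 0 then l.foldr min a else l.foldr max a
      1 + msLenAux fuel (fun i => s (i + 1)) ((l.dropWhile (· != v)).tail)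

/-- The length of the `s`-driven min/max subsequence of a list
(`s j = true` means minimum at step `j`, `s j = false` means maximum). -/
def msLen (s : ℕ → Bool) (l : List ℕ) : ℕ := msLenAux l.length s l

/-- The one-line notation of `π` as a list of natural numbers. -/
def oneLine {n : ℕ} (π : Equiv.Perm (Fin n)) : List ℕ :=
  List.ofFn fun i => ((π i : ℕ))

/-- The statistic `m_s(π)`: the length of the `s`-driven min/max subsequence
of the one-line notation of `π`. -/
def msStat {n : ℕ} (s : ℕ → Bool) (π : Equiv.Perm (Fin n)) : ℕ :=
  msLen s (oneLine π)

/-- `st π`: the length of the min-max sequence of `π` (alternately take the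
minimum, the maximum, the minimum, … of what remains to the right). -/
def stStat {n : ℕ} (π : Equiv.Perm (Fin n)) : ℕ :=
  msStat (fun i => i % 2 == 0) π

/-- `π` is a cyclic permutation: it consists of a single cycle. -/
def IsCyclicPerm {n : ℕ} (π : Equiv.Perm (Fin n)) : Prop :=
  ∀ x y : Fin n, π.SameCycle x y

/-- The number of up-down cycles of `π` having length `k`. -/
noncomputable def udLenCount {n : ℕ} (π : Equiv.Perm (Fin n)) (k : ℕ) : ℕ :=
  Nat.card {x : Fin n // IsOrbitMin π x ∧ cycLen π x = k ∧ CycleUpDownAt π x}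

/-- `ud π`: the number of up-down cycles of `π`. -/
noncomputable def udCount {n : ℕ} (π : Equiv.Perm (Fin n)) : ℕ :=
  Nat.card {x : Fin n // IsOrbitMin π x ∧ CycleUpDownAt π x}

/-- `r n`: the number of permutations of `[n]` having no up-down cycles. -/
noncomputable def noUDCyclesCount (n : ℕ) : ℕ :=
  Nat.card {π : Equiv.Perm (Fin n) // ∀ x : Fin n, IsOrbitMin π x → ¬ CycleUpDownAt π x}

/-!
Both statistics have the same generating polynomial, read off an `X`-weighted Seidel–Entringer
triangle by building the objects one letter at a time.

* Read an up-down permutation from right to left. A letter that is not the last one read is extreme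
  exactly when it is the least or the greatest of the letters not read before it. Before an ascent
  the greatest of these letters is impossible, while the least one has weight `X` and leaves every
  remaining letter admissible; before a descent the roles are exchanged.
* Write each cycle of a cycle-up-down permutation starting from its least element. From the letter
  just written, either the cycle closes, and a new one of weight `X` opens at the least unused
  letter, or it continues with an unused letter on the correct side.

In both cases, with `m + 1` letters left of which `c` are admissible (not counting, in the first
case, the least and the greatest letter), one chooses between a step of weight `X` after which all
`m` letters left are admissible and steps of weight `1` after which `m, m - 1, …, m - c + 1` letters
are admissible.
-/

section

open Polynomial
open scoped Classical

/-- The Seidel–Entringer triangle weighted by a variable `X`: the generating polynomial of the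
completions of a partial word when `m` letters are left and `c ≤ m` of them are admissible as the
next letter. -/
noncomputable def entringerPoly : ℕ → ℕ → ℕ[X]
  | 0, _ => 1
  | m + 1, c => X * entringerPoly m m + ∑ i ∈ range c, entringerPoly m (m - i)

/-- The common generating polynomial of the two statistics, an `X`-analogue of the Euler numbers. -/
noncomputable def eulerPoly : ℕ → ℕ[X]
  | 0 => 1
  | m + 1 => X * entringerPoly m m

theorem coeff_sum_X_pow {ι : Type*} [Fintype ι] (P : ι → Prop) (f : ι → ℕ) (k : ℕ) :
    (∑ a with P a, (X : ℕ[X]) ^ f a).coeff k = Nat.card {a // P a ∧ f a = k} := by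
  simp only [finsetSum_coeff, coeff_X_pow, sum_boole, filter_filter, Nat.cast_id,
    Nat.card_eq_fintype_card, Fintype.card_subtype, eq_comm (a := k)]

section IsLeastBy

variable {α : Type*}

/-- `a` is the least element of `S` in the strict order `r`. -/
def IsLeastBy (r : α → α → Prop) (S : Finset α) (a : α) : Prop :=
  a ∈ S ∧ ∀ b ∈ S, b ≠ a → r a b

theorem IsLeastBy.erase [DecidableEq α] {r : α → α → Prop} {S : Finset α} {a b : α}
    (ha : IsLeastBy r S a) (hab : a ≠ b) : IsLeastBy r (S.erase b) a :=
  ⟨mem_erase.2 ⟨hab, ha.1⟩, fun c hc => ha.2 c (mem_of_mem_erase hc)⟩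

theorem IsLeastBy.card_filter_erase [DecidableEq α] {r : α → α → Prop} {S : Finset α} {a : α}
    (ha : IsLeastBy r S a) : #{b ∈ S.erase a | r a b} = #S - 1 := by
  rw [filter_true_of_mem fun b hb => ha.2 b (mem_of_mem_erase hb) (ne_of_mem_erase hb),
    card_erase_of_mem ha.1]

theorem exists_isLeastBy (r : α → α → Prop) [IsStrictTotalOrder α r] {S : Finset α}
    (hS : S.Nonempty) : ∃ a, IsLeastBy r S a := by
  let := linearOrderOfSTO r
  exact ⟨S.min' hS, S.min'_mem hS, fun b hb hne => (S.min'_le b hb).lt_of_ne' hne⟩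

theorem IsLeastBy.ne_of_swap {r : α → α → Prop} [IsStrictTotalOrder α r] {S : Finset α} {a b : α}
    (ha : IsLeastBy r S a) (hb : IsLeastBy (Function.swap r) S b) (hS : 1 < #S) : a ≠ b := by
  rintro rfl
  obtain ⟨c, hc, hca⟩ := exists_mem_ne hS a
  exact asymm_of r (ha.2 c hc hca) (hb.2 c hc hca)

end IsLeastBy

section StrictTotalOrder

variable {α : Type*} (r : α → α → Prop) [IsStrictTotalOrder α r]

theorem card_filter_rel_injOn (S : Finset α) : Set.InjOn (fun y => #{z ∈ S | r z y}) S := by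
  have card_lt {a b : α} (ha : a ∈ S) (hab : r a b) : #{z ∈ S | r z a} < #{z ∈ S | r z b} := by
    refine card_lt_card (ssubset_iff_of_subset ?_ |>.2 ⟨a, ?_, ?_⟩)
    · exact monotone_filter_right S fun z _ hz => trans_of r hz hab
    · exact mem_filter.2 ⟨ha, hab⟩
    · exact fun h => irrefl_of r a (mem_filter.1 h).2
  intro a ha b hb hab
  rcases trichotomous_of r a b with h | h | h
  · exact absurd hab (card_lt ha h).ne
  · exact h
  · exact absurd hab (card_lt hb h).ne'

theorem sum_card_filter_rel {M : Type*} [AddCommMonoid M] (S : Finset α) (g : ℕ → M) :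
    ∑ y ∈ S, g #{z ∈ S | r z y} = ∑ i ∈ range #S, g i := by
  have maps : ∀ y ∈ S, #{z ∈ S | r z y} ∈ range #S := fun y hy =>
    mem_range.2 <| card_lt_card <| filter_ssubset.2 ⟨y, hy, irrefl_of r y⟩
  exact sum_nbij _ maps (card_filter_rel_injOn r S)
    (surjOn_of_injOn_of_card_le _ maps (card_filter_rel_injOn r S) (card_range _).le)
    fun _ _ => rfl

theorem card_filter_rel_erase [DecidableEq α] {S : Finset α} {y : α} (hy : y ∈ S) :
    #{z ∈ S.erase y | r y z} = #S - 1 - #{z ∈ S | r z y} := by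
  have split := card_filter_add_card_filter_not (s := S.erase y) (fun z => r z y)
  have below : {z ∈ S.erase y | r z y} = {z ∈ S | r z y} := by
    ext z
    simp only [mem_filter, mem_erase]
    exact ⟨fun h => ⟨h.1.2, h.2⟩, fun h => ⟨⟨ne_of_irrefl h.2, h.1⟩, h.2⟩⟩
  have above : {z ∈ S.erase y | ¬ r z y} = {z ∈ S.erase y | r y z} := by
    refine filter_congr fun z hz => ⟨fun h => ?_, fun h => asymm_of r h⟩
    exact ((trichotomous_of r z y).resolve_left h).resolve_left (ne_of_mem_erase hz)
  rw [below, above, card_erase_of_mem hy] at split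
  omega

theorem sum_card_filter_rel_erase [DecidableEq α] {M : Type*} [AddCommMonoid M] (S : Finset α)
    {p : α → Prop} (hp : ∀ y z, p y → r z y → p z) (g : ℕ → M) :
    ∑ y ∈ S with p y, g #{z ∈ S.erase y | r y z} =
      ∑ i ∈ range #{y ∈ S | p y}, g (#S - 1 - i) := by
  rw [← sum_card_filter_rel r {y ∈ S | p y} fun i => g (#S - 1 - i)]
  refine sum_congr rfl fun y hy => ?_
  obtain ⟨hyS, hpy⟩ := mem_filter.1 hy
  have below : {z ∈ {z ∈ S | p z} | r z y} = {z ∈ S | r z y} := by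
    rw [filter_filter]
    exact filter_congr fun z _ => and_iff_right_of_imp (hp y z hpy)
  rw [below, card_filter_rel_erase r hyS]

end StrictTotalOrder

section AlternatesBy

variable {α : Type*}

/-- The word `a₀ a₁ a₂ …` satisfies `r a₀ a₁`, `r a₂ a₁`, `r a₂ a₃`, …: it is up-down for
`r = (<)` and down-up for `r = (>)`. -/
def AlternatesBy : (α → α → Prop) → List α → Prop
  | _, [] => True
  | r, a :: l => (∀ b ∈ l.head?, r a b) ∧ AlternatesBy (Function.swap r) l

theorem alternatesBy_cons_cons {r : α → α → Prop} {a b : α} {l : List α} :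
    AlternatesBy r (a :: b :: l) ↔ r a b ∧ AlternatesBy (Function.swap r) (b :: l) := by
  simp [AlternatesBy]

theorem alternatesBy_iff_getElem {r : α → α → Prop} {l : List α} :
    AlternatesBy r l ↔ ∀ (i : ℕ) (h : i + 1 < l.length),
      (i % 2 = 0 → r l[i] l[i + 1]) ∧ (i % 2 = 1 → r l[i + 1] l[i]) := by
  induction l generalizing r with
  | nil => simp [AlternatesBy]
  | cons a l ih =>
    cases l with
    | nil => simp [AlternatesBy]
    | cons b l =>
      rw [alternatesBy_cons_cons, ih]
      constructor
      · rintro ⟨hab, h⟩ (_ | i) hi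
        · simpa using hab
        · have := h i (by simpa using hi)
          simp only [List.getElem_cons_succ]
          exact ⟨fun e => this.2 (by omega), fun e => this.1 (by omega)⟩
      · intro h
        refine ⟨(h 0 (by simp)).1 rfl, fun i hi => ?_⟩
        have := h (i + 1) (by simpa using hi)
        exact ⟨fun e => this.2 (by omega), fun e => this.1 (by omega)⟩

end AlternatesBy

section Arrangements

variable {α : Type*}

/-- The words in which each letter of `V` occurs exactly once and no other letter occurs. -/
noncomputable def arrangements (V : Finset α) : Finset (List α) :=
  V.toList.permutations.toFinset

theorem mem_arrangements {V : Finset α} {l : List α} :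
    l ∈ arrangements V ↔ l.Nodup ∧ ∀ a, a ∈ l ↔ a ∈ V := by
  rw [arrangements, List.mem_toFinset, List.mem_permutations]
  constructor
  · exact fun h => ⟨h.nodup_iff.2 V.nodup_toList, fun a => h.mem_iff.trans mem_toList⟩
  · rintro ⟨hl, hV⟩
    exact (List.perm_ext_iff_of_nodup hl V.nodup_toList).2 fun a => (hV a).trans mem_toList.symm

theorem cons_mem_arrangements {V : Finset α} {a : α} {l : List α} :
    a :: l ∈ arrangements V ↔ a ∈ V ∧ l ∈ arrangements (V.erase a) := by
  simp only [mem_arrangements, List.nodup_cons, List.mem_cons, mem_erase]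
  grind

theorem arrangements_empty : arrangements (∅ : Finset α) = {[]} := by
  simp [arrangements]

theorem ne_nil_of_mem_arrangements {V : Finset α} (hV : V.Nonempty) {l : List α}
    (hl : l ∈ arrangements V) : l ≠ [] := by
  rintro rfl
  obtain ⟨a, ha⟩ := hV
  exact List.not_mem_nil (((mem_arrangements.1 hl).2 a).2 ha)

theorem sum_arrangements {M : Type*} [AddCommMonoid M] {V : Finset α} (hV : V.Nonempty)
    (f : List α → M) :
    ∑ l ∈ arrangements V, f l = ∑ a ∈ V, ∑ l ∈ arrangements (V.erase a), f (a :: l) := by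
  rw [sum_sigma']
  symm
  refine sum_bij (fun x _ => x.1 :: x.2) ?_ ?_ ?_ fun _ _ => rfl
  · exact fun x hx => cons_mem_arrangements.2 (mem_sigma.1 hx)
  · rintro ⟨a, l⟩ - ⟨b, l'⟩ - h
    simpa using h
  · intro l hl
    obtain ⟨a, l, rfl⟩ := List.exists_cons_of_ne_nil (ne_nil_of_mem_arrangements hV hl)
    exact ⟨⟨a, l⟩, mem_sigma.2 (cons_mem_arrangements.1 hl), rfl⟩

theorem ofFn_mem_arrangements_univ {n : ℕ} (π : Perm (Fin n)) :
    List.ofFn π ∈ arrangements univ :=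
  mem_arrangements.2
    ⟨List.nodup_ofFn.2 π.injective, fun a => by simp [List.mem_ofFn, π.surjective a]⟩

theorem exists_ofFn_eq_of_mem_arrangements {n : ℕ} {l : List (Fin n)}
    (hl : l ∈ arrangements univ) : ∃ π : Perm (Fin n), List.ofFn π = l := by
  obtain ⟨nodup, hmem⟩ := mem_arrangements.1 hl
  let e := nodup.getEquivOfForallMemList l fun a => (hmem a).2 (mem_univ a)
  have length_eq : l.length = n := by simpa using Fintype.card_congr e
  refine ⟨(finCongr length_eq.symm).trans e, List.ext_getElem (by simp [length_eq]) ?_⟩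
  intro i _ _
  simp [e]

theorem sum_perm_ofFn {M : Type*} [AddCommMonoid M] {n : ℕ} (f : List (Fin n) → M) :
    ∑ π : Perm (Fin n), f (List.ofFn π) = ∑ l ∈ arrangements univ, f l :=
  sum_nbij (fun π => List.ofFn π) (fun π _ => ofFn_mem_arrangements_univ π)
    (fun _ _ _ _ h => DFunLike.coe_injective (List.ofFn_injective h))
    (fun _ hl => (exists_ofFn_eq_of_mem_arrangements hl).imp fun _ h => ⟨mem_univ _, h⟩)
    fun _ _ => rfl

end Arrangements

section ExtremeCount

variable {α : Type*}

/-- `y` lies outside the nonempty range spanned by `S`, in the order `r`. -/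
def IsExtremeOver (r : α → α → Prop) (y : α) (S : Set α) : Prop :=
  S.Nonempty ∧ ((∀ z ∈ S, r y z) ∨ ∀ z ∈ S, r z y)

/-- The number of letters of a word that are extreme over the letters to their right. This is the
statistic `extr` of the reversed word. -/
noncomputable def extremeCount (r : α → α → Prop) : List α → ℕ
  | [] => 0
  | y :: l => extremeCount r l + if IsExtremeOver r y {z | z ∈ l} then 1 else 0

theorem isExtremeOver_swap {r : α → α → Prop} {y : α} {S : Set α} :
    IsExtremeOver (Function.swap r) y S ↔ IsExtremeOver r y S :=
  and_congr_right' or_comm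

theorem extremeCount_swap (r : α → α → Prop) (l : List α) :
    extremeCount (Function.swap r) l = extremeCount r l := by
  induction l with
  | nil => rfl
  | cons y l ih => simp only [extremeCount, ih, isExtremeOver_swap]

end ExtremeCount

section AlternatingSum

variable {α : Type*}

/-- The generating polynomial, by extreme letters, of the arrangements of `V` that alternate by `r`
and whose first letter, if any, satisfies `p`. -/
noncomputable def alternatingSum (r : α → α → Prop) (p : α → Prop) (V : Finset α) : ℕ[X] :=
  ∑ l ∈ arrangements V with (∀ a ∈ l.head?, p a) ∧ AlternatesBy r l, X ^ extremeCount r l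

theorem alternatingSum_empty (r : α → α → Prop) (p : α → Prop) :
    alternatingSum r p ∅ = 1 := by
  simp [alternatingSum, arrangements_empty, sum_filter, AlternatesBy, extremeCount]

theorem alternatingSum_eq_sum {r : α → α → Prop} {p : α → Prop} {V : Finset α} (hV : V.Nonempty) :
    alternatingSum r p V = ∑ y ∈ V with p y,
      (if IsExtremeOver r y (V.erase y) then X else 1) *
        alternatingSum (Function.swap r) (r y) (V.erase y) := by
  simp only [alternatingSum, sum_filter]
  rw [sum_arrangements hV]
  refine sum_congr rfl fun y _ => ?_
  by_cases hpy : p y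
  · rw [if_pos hpy, mul_sum]
    refine sum_congr rfl fun l hl => ?_
    have letters : {z | z ∈ l} = (V.erase y : Set α) := by
      ext z
      exact_mod_cast (mem_arrangements.1 hl).2 z
    simp only [List.head?_cons, Option.mem_some_iff, forall_eq', hpy, true_and, AlternatesBy,
      extremeCount, letters, extremeCount_swap, mul_ite, mul_zero, pow_add, pow_ite, pow_one,
      pow_zero, mul_comm (X ^ _)]
  · simp only [List.head?_cons, Option.mem_some_iff, forall_eq', hpy, false_and, if_false,
      sum_const_zero]

theorem alternatingSum_eq_zero {r : α → α → Prop} {p : α → Prop} {V : Finset α} (hV : V.Nonempty)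
    (hp : ∀ y ∈ V, ¬ p y) : alternatingSum r p V = 0 := by
  rw [alternatingSum_eq_sum hV, filter_false_of_mem hp, sum_empty]

theorem alternatingSum_singleton {r : α → α → Prop} {p : α → Prop} {a : α} (ha : p a) :
    alternatingSum r p {a} = 1 := by
  rw [alternatingSum_eq_sum (singleton_nonempty a), filter_singleton, if_pos ha, sum_singleton,
    erase_singleton, alternatingSum_empty, if_neg (by simp [IsExtremeOver]), mul_one]

variable {r : α → α → Prop} [IsStrictTotalOrder α r] {p : α → Prop} {V : Finset α} {M e : α}

theorem alternatingSum_eq_add_sum (hM : IsLeastBy r V M) (he : IsLeastBy (Function.swap r) V e)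
    (hMe : M ≠ e) (hpM : p M) :
    alternatingSum r p V = X * alternatingSum (Function.swap r) (r M) (V.erase M) +
      ∑ y ∈ (V.erase M).erase e with p y, alternatingSum (Function.swap r) (r y) (V.erase y) := by
  have heM : e ∈ V.erase M := (he.erase hMe.symm).1
  have extreme_M : IsExtremeOver r M (V.erase M) :=
    ⟨⟨e, heM⟩, .inl fun z hz => hM.2 z (mem_of_mem_erase hz) (ne_of_mem_erase hz)⟩
  have term_e : alternatingSum (Function.swap r) (r e) (V.erase e) = 0 :=
    alternatingSum_eq_zero ⟨M, (hM.erase hMe).1⟩ fun z hz =>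
      asymm_of r (he.2 z (mem_of_mem_erase hz) (ne_of_mem_erase hz))
  have not_extreme : ∀ y ∈ (V.erase M).erase e, ¬ IsExtremeOver r y (V.erase y) := by
    intro y hy
    simp only [mem_erase] at hy
    obtain ⟨hye, hyM, hyV⟩ := hy
    rintro ⟨-, h | h⟩
    · exact asymm_of r (hM.2 y hyV hyM) (h M (hM.erase hyM.symm).1)
    · exact asymm_of r (he.2 y hyV hye) (h e (he.erase hye.symm).1)
  rw [alternatingSum_eq_sum ⟨M, hM.1⟩, sum_filter, ← add_sum_erase _ _ hM.1,
    ← add_sum_erase _ _ heM, if_pos hpM, if_pos extreme_M, term_e, mul_zero, ite_self, zero_add,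
    sum_filter]
  congr 1
  exact sum_congr rfl fun y hy => by rw [if_neg (not_extreme y hy), one_mul]

theorem card_erase_erase {a b : α} (ha : a ∈ V) (hb : b ∈ V) (hab : a ≠ b) :
    #((V.erase a).erase b) = #V - 2 := by
  rw [card_erase_of_mem (mem_erase.2 ⟨hab.symm, hb⟩), card_erase_of_mem ha, Nat.sub_sub]

theorem alternatingSum_eq_entringerPoly {m : ℕ} (hm : #V = m + 2) (hM : IsLeastBy r V M)
    (he : IsLeastBy (Function.swap r) V e) (hp : ∀ y z, p y → r z y → p z) (hpM : p M) :
    alternatingSum r p V = X * entringerPoly m #{y ∈ (V.erase M).erase e | p y} := by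
  induction m generalizing r p V M e with
  | zero =>
    have hMe : M ≠ e := hM.ne_of_swap he (by omega)
    have hV : V.erase M = {e} :=
      (eq_of_subset_of_card_le (singleton_subset_iff.2 (he.erase hMe.symm).1)
        (by rw [card_erase_of_mem hM.1, hm, card_singleton])).symm
    rw [alternatingSum_eq_add_sum hM he hMe hpM, hV, erase_singleton, filter_empty, sum_empty,
      add_zero, alternatingSum_singleton (hM.2 e he.1 hMe.symm), entringerPoly]
  | succ m ih =>
    have hMe : M ≠ e := hM.ne_of_swap he (by omega)
    have card_erase {y : α} (hy : y ∈ V) : #(V.erase y) = m + 2 := by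
      rw [card_erase_of_mem hy, hm, Nat.add_sub_assoc (by decide)]
    have extreme_term : alternatingSum (Function.swap r) (r M) (V.erase M) =
        X * entringerPoly m m := by
      obtain ⟨M', hM'⟩ := exists_isLeastBy r ⟨e, (he.erase hMe.symm).1⟩
      have hMe' : M' ≠ e := hM'.ne_of_swap (he.erase hMe.symm) (by rw [card_erase hM.1]; omega)
      have all_admissible : ∀ y ∈ ((V.erase M).erase e).erase M', r M y := fun y hy => by
        simp only [mem_erase] at hy
        exact hM.2 y hy.2.2.2 hy.2.2.1
      rw [ih (card_erase hM.1) (he.erase hMe.symm) hM' (fun y z hy hz => trans_of r hy hz)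
        (hM.2 e he.1 hMe.symm), filter_true_of_mem all_admissible,
        card_erase_erase (he.erase hMe.symm).1 hM'.1 hMe'.symm, card_erase hM.1,
        Nat.add_sub_cancel]
    have middle_term : ∀ y ∈ (V.erase M).erase e,
        alternatingSum (Function.swap r) (r y) (V.erase y) =
          X * entringerPoly m #{z ∈ ((V.erase M).erase e).erase y | r y z} := by
      intro y hy
      simp only [mem_erase] at hy
      obtain ⟨hye, hyM, hyV⟩ := hy
      rw [ih (card_erase hyV) (he.erase hye.symm) (hM.erase hyM.symm)
        (fun a b ha hb => trans_of r ha hb) (he.2 y hyV hye), erase_right_comm (a := y),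
        erase_right_comm (a := y), erase_right_comm (a := e)]
    have card_middle : #((V.erase M).erase e) - 1 = m := by
      rw [card_erase_erase hM.1 he.1 hMe, hm]
      rfl
    rw [alternatingSum_eq_add_sum hM he hMe hpM, extreme_term,
      sum_congr rfl fun y hy => middle_term y (mem_filter.1 hy).1, ← mul_sum,
      sum_card_filter_rel_erase r _ hp, card_middle, entringerPoly, mul_add]

theorem alternatingSum_eq_eulerPoly {n : ℕ} (hV : #V = n + 1) :
    alternatingSum r (fun _ => True) V = eulerPoly n := by
  cases n with
  | zero =>
    obtain ⟨a, rfl⟩ := card_eq_one.1 hV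
    exact alternatingSum_singleton trivial
  | succ m =>
    have nonempty : V.Nonempty := card_pos.1 (by omega)
    obtain ⟨M, hM⟩ := exists_isLeastBy r nonempty
    obtain ⟨e, he⟩ := exists_isLeastBy (Function.swap r) nonempty
    rw [alternatingSum_eq_entringerPoly hV hM he (fun _ _ _ _ => trivial) trivial, filter_true,
      card_erase_erase hM.1 he.1 (hM.ne_of_swap he (by omega)), hV]
    rfl

end AlternatingSum

section UpDownPerm

theorem extremeCount_ofFn_rev {α : Type*} (r : α → α → Prop) {n : ℕ} (f : Fin n → α) :
    extremeCount r (List.ofFn (f ∘ Fin.rev)) = #{i | IsExtremeOver r (f i) (f '' Set.Iio i)} := by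
  induction n with
  | zero => simp [extremeCount]
  | succ n ih =>
    have tail : (fun i : Fin n => (f ∘ Fin.rev) i.succ) = (f ∘ Fin.castSucc) ∘ Fin.rev := by
      ext i
      simp [Fin.rev_succ]
    have letters : {z | z ∈ List.ofFn ((f ∘ Fin.castSucc) ∘ Fin.rev)} =
        f '' Set.Iio (Fin.last n) := by
      have range : Set.Iio (Fin.last n) = Set.range (Fin.castSucc ∘ Fin.rev) := by
        rw [Fin.rev_surjective.range_comp, Fin.range_castSucc]
        rfl
      ext z
      rw [range, ← Set.range_comp]
      exact List.mem_ofFn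
    have image (i : Fin n) : (f ∘ Fin.castSucc) '' Set.Iio i = f '' Set.Iio i.castSucc := by
      rw [Set.image_comp, Fin.image_castSucc_Iio]
    rw [List.ofFn_succ, extremeCount, tail, letters, ih, card_filter, card_filter,
      Fin.sum_univ_castSucc]
    simp only [image]
    simp only [Function.comp_apply, Fin.rev_zero]

/-- The one-line notation of `π` read from right to left. -/
def reversedWord {n : ℕ} (π : Perm (Fin n)) : List (Fin n) :=
  List.ofFn (π ∘ Fin.rev)

theorem extrCount_eq_extremeCount {n : ℕ} (π : Perm (Fin n)) :
    extrCount π = extremeCount (· < ·) (reversedWord π) := by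
  have not_first (i : Fin n) : (π '' Set.Iio i).Nonempty ↔ (i : ℕ) ≠ 0 := by
    rw [Set.image_nonempty]
    exact ⟨fun ⟨_, hj⟩ => Nat.ne_zero_of_lt hj, fun hi => ⟨⟨0, by omega⟩, Nat.pos_of_ne_zero hi⟩⟩
  rw [reversedWord, extremeCount_ofFn_rev, extrCount, Nat.card_eq_fintype_card,
    Fintype.card_subtype]
  simp only [IsExtremeOver, not_first, Set.forall_mem_image, Set.mem_Iio]

theorem isUpDownPerm_iff_rev {n : ℕ} (π : Perm (Fin (n + 1))) :
    IsUpDownPerm π ↔ ∀ (i : ℕ) (h : i + 1 < n + 1),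
      ((n + i) % 2 = 0 → π (Fin.rev ⟨i, by omega⟩) < π (Fin.rev ⟨i + 1, h⟩)) ∧
        ((n + i) % 2 = 1 → π (Fin.rev ⟨i + 1, h⟩) < π (Fin.rev ⟨i, by omega⟩)) := by
  constructor
  · intro hπ i h
    have step := hπ (Fin.rev ⟨i + 1, h⟩) (Fin.rev ⟨i, by omega⟩) (by simp only [Fin.val_rev]; omega)
    simp only [Fin.val_rev] at step
    exact ⟨fun hi => step.2 (by omega), fun hi => step.1 (by omega)⟩
  · intro h i j hij
    have step := h (Fin.rev j) (by simp only [Fin.val_rev]; omega)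
    have rev_i :
        (⟨Fin.rev j + 1, by simp only [Fin.val_rev]; omega⟩ : Fin (n + 1)) = Fin.rev i := by
      ext
      simp only [Fin.val_rev]
      omega
    simp only [rev_i, Fin.eta, Fin.rev_rev] at step
    simp only [Fin.val_rev] at step
    exact ⟨fun hi => step.2 (by omega), fun hi => step.1 (by omega)⟩

theorem isUpDownPerm_iff_of_even {n : ℕ} (hn : Even n) (π : Perm (Fin (n + 1))) :
    IsUpDownPerm π ↔ AlternatesBy (· < ·) (reversedWord π) := by
  simp only [isUpDownPerm_iff_rev, alternatesBy_iff_getElem, reversedWord, List.length_ofFn,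
    List.getElem_ofFn, Function.comp_apply, Nat.add_mod n, Nat.even_iff.1 hn, zero_add, Nat.mod_mod]

theorem isUpDownPerm_iff_of_odd {n : ℕ} (hn : Odd n) (π : Perm (Fin (n + 1))) :
    IsUpDownPerm π ↔ AlternatesBy (Function.swap (· < ·)) (reversedWord π) := by
  have parity (i : ℕ) : ((n + i) % 2 = 0 ↔ i % 2 = 1) ∧ ((n + i) % 2 = 1 ↔ i % 2 = 0) := by
    rw [Nat.odd_iff] at hn
    omega
  simp only [isUpDownPerm_iff_rev, alternatesBy_iff_getElem, reversedWord, List.length_ofFn,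
    List.getElem_ofFn, Function.comp_apply, parity, Function.swap]
  exact forall₂_congr fun _ _ => and_comm

theorem sum_X_pow_extremeCount_reversedWord {n : ℕ} (r : Fin (n + 1) → Fin (n + 1) → Prop)
    [IsStrictTotalOrder (Fin (n + 1)) r] :
    ∑ π : Perm (Fin (n + 1)) with AlternatesBy r (reversedWord π),
      (X : ℕ[X]) ^ extremeCount r (reversedWord π) = eulerPoly n := by
  rw [← alternatingSum_eq_eulerPoly (r := r) (card_fin (n + 1)), alternatingSum, sum_filter,
    sum_filter, ← sum_perm_ofFn]
  simp only [implies_true, true_and]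
  exact Equiv.sum_comp (Equiv.mulRight Fin.revPerm) fun π : Perm (Fin (n + 1)) =>
    if AlternatesBy r (List.ofFn π) then (X : ℕ[X]) ^ extremeCount r (List.ofFn π) else 0

theorem sum_X_pow_extrCount (n : ℕ) :
    ∑ π : Perm (Fin (n + 1)) with IsUpDownPerm π, (X : ℕ[X]) ^ extrCount π = eulerPoly n := by
  simp only [extrCount_eq_extremeCount]
  rcases n.even_or_odd with hn | hn
  · simp only [isUpDownPerm_iff_of_even hn]
    exact sum_X_pow_extremeCount_reversedWord (· < ·)
  · simp only [isUpDownPerm_iff_of_odd hn, ← extremeCount_swap (· < ·)]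
    exact sum_X_pow_extremeCount_reversedWord (Function.swap (· < ·))

end UpDownPerm

section CycleWord

variable {α : Type*}

/-- The cycle of `σ` through `x`, written as the word `x, σ x, σ² x, …`. -/
noncomputable def cycleWord (σ : Perm α) (x : α) : List α :=
  List.iterate σ x (Function.minimalPeriod σ x)

theorem cycleWord_of_apply_eq {τ : Perm α} {x : α} (hx : τ x = x) : cycleWord τ x = [x] := by
  rw [cycleWord, Function.minimalPeriod_eq_one_iff_isFixedPt.2 hx]
  rfl

theorem alternatesBy_cycleWord_iff {r : α → α → Prop} {σ : Perm α} {x : α} :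
    AlternatesBy r (cycleWord σ x) ↔ ∀ i, i + 1 < Function.minimalPeriod σ x →
      (i % 2 = 0 → r ((σ ^ i) x) ((σ ^ (i + 1)) x)) ∧
        (i % 2 = 1 → r ((σ ^ (i + 1)) x) ((σ ^ i) x)) := by
  simp only [alternatesBy_iff_getElem, cycleWord, List.length_iterate, List.getElem_iterate,
    Perm.iterate_eq_pow]

theorem sameCycle_iff_of_apply_eq {τ : Perm α} {x z : α} (hx : τ x = x) :
    τ.SameCycle x z ↔ z = x :=
  ⟨fun h => (h.eq_of_left hx).symm, fun h => h ▸ .rfl⟩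

theorem sameCycle_iff_exists_iterate [Finite α] {σ : Perm α} {x z : α} :
    σ.SameCycle x z ↔ ∃ i, σ^[i] x = z := by
  simp only [Perm.iterate_eq_pow]
  exact ⟨fun h => h.exists_nat_pow_eq, fun ⟨i, hi⟩ => ⟨i, by simpa using hi⟩⟩

theorem iterate_ne_of_apply_eq {τ : Perm α} {x z : α} (hx : τ x = x) (hzx : z ≠ x) (i : ℕ) :
    τ^[i] z ≠ x :=
  ((τ.injective.iterate i).ne_iff' (Function.iterate_fixed hx i)).2 hzx

theorem minimalPeriod_perm_pos [Finite α] (σ : Perm α) (x : α) :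
    0 < Function.minimalPeriod σ x :=
  Function.minimalPeriod_pos_of_mem_periodicPts (σ.injective.mem_periodicPts x)

theorem head?_cycleWord [Finite α] (σ : Perm α) (x : α) : (cycleWord σ x).head? = some x := by
  obtain ⟨p, hp⟩ := Nat.exists_eq_add_one.2 (minimalPeriod_perm_pos σ x)
  rw [cycleWord, hp]
  rfl

theorem mem_cycleWord [Finite α] {σ : Perm α} {x z : α} :
    z ∈ cycleWord σ x ↔ σ.SameCycle x z := by
  rw [cycleWord, List.mem_iterate, sameCycle_iff_exists_iterate]
  constructor
  · rintro ⟨i, -, rfl⟩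
    exact ⟨i, rfl⟩
  · rintro ⟨i, rfl⟩
    exact ⟨i % Function.minimalPeriod σ x, Nat.mod_lt _ (minimalPeriod_perm_pos σ x),
      Function.iterate_mod_minimalPeriod_eq.symm⟩

end CycleWord

section InsertBefore

variable {α : Type*} [DecidableEq α] {τ : Perm α} {x y z : α}

theorem swap_mul_apply_of_ne (hx : τ x = x) (hzx : z ≠ x) (hzy : τ z ≠ y) :
    (swap x y * τ) z = τ z := by
  rw [Perm.mul_apply, swap_apply_of_ne_of_ne _ hzy]
  exact fun h => hzx (τ.injective (h.trans hx.symm))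

theorem iterate_succ_swap_mul (hx : τ x = x) (hyx : y ≠ x) {i : ℕ}
    (hi : i < Function.minimalPeriod τ y) : (swap x y * τ)^[i + 1] x = τ^[i] y := by
  induction i with
  | zero => simp [hx]
  | succ i ih =>
    rw [Function.iterate_succ_apply', ih (by omega), Function.iterate_succ_apply']
    refine swap_mul_apply_of_ne hx (iterate_ne_of_apply_eq hx hyx i) fun h => ?_
    rw [← Function.iterate_succ_apply' τ] at h
    exact Function.not_isPeriodicPt_of_pos_of_lt_minimalPeriod i.succ_ne_zero hi h

variable [Finite α]

theorem minimalPeriod_swap_mul (hx : τ x = x) (hyx : y ≠ x) :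
    Function.minimalPeriod (swap x y * τ) x = Function.minimalPeriod τ y + 1 := by
  obtain ⟨p, hp⟩ := Nat.exists_eq_add_one.2 (minimalPeriod_perm_pos τ y)
  obtain ⟨q, hq⟩ := Nat.exists_eq_add_one.2 (minimalPeriod_perm_pos (swap x y * τ) x)
  have returns : Function.IsPeriodicPt (swap x y * τ) (p + 2) x := by
    have hτ : τ (τ^[p] y) = y := by
      simpa only [hp, Function.iterate_succ_apply'] using
        Function.iterate_minimalPeriod (f := τ) (x := y)
    rw [Function.IsPeriodicPt, Function.IsFixedPt, Function.iterate_succ_apply',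
      iterate_succ_swap_mul hx hyx (by omega), Perm.mul_apply, hτ, swap_apply_right]
  have no_earlier_return : ¬ q < Function.minimalPeriod τ y := fun h => by
    have return_eq := iterate_succ_swap_mul hx hyx h
    rw [← hq, Function.iterate_minimalPeriod] at return_eq
    exact iterate_ne_of_apply_eq hx hyx q return_eq.symm
  have := returns.minimalPeriod_le (by omega)
  omega

theorem cycleWord_swap_mul (hx : τ x = x) (hyx : y ≠ x) :
    cycleWord (swap x y * τ) x = x :: cycleWord τ y := by
  rw [cycleWord, minimalPeriod_swap_mul hx hyx, List.iterate, cycleWord]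
  congr 1
  refine List.ext_getElem (by simp) fun i hi _ => ?_
  rw [List.getElem_iterate, List.getElem_iterate, ← Function.iterate_succ_apply,
    iterate_succ_swap_mul hx hyx (by simpa using hi)]

theorem sameCycle_swap_mul (hx : τ x = x) (hyx : y ≠ x) :
    (swap x y * τ).SameCycle x z ↔ z = x ∨ τ.SameCycle y z := by
  rw [← mem_cycleWord, cycleWord_swap_mul hx hyx, List.mem_cons, mem_cycleWord]

theorem iterate_swap_mul_of_not_sameCycle (hx : τ x = x) (hzx : z ≠ x) (hyz : ¬ τ.SameCycle y z)
    (i : ℕ) : (swap x y * τ)^[i] z = τ^[i] z := by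
  induction i with
  | zero => rfl
  | succ i ih =>
    rw [Function.iterate_succ_apply', ih, Function.iterate_succ_apply']
    refine swap_mul_apply_of_ne hx (iterate_ne_of_apply_eq hx hzx i) fun h => hyz ?_
    exact (sameCycle_iff_exists_iterate.2 ⟨i + 1, Function.iterate_succ_apply' τ i z ▸ h⟩).symm

theorem cycleWord_swap_mul_of_not_sameCycle (hx : τ x = x) (hzx : z ≠ x)
    (hyz : ¬ τ.SameCycle y z) : cycleWord (swap x y * τ) z = cycleWord τ z := by
  have iterate_eq := iterate_swap_mul_of_not_sameCycle hx hzx hyz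
  have period_eq : Function.minimalPeriod (swap x y * τ) z = Function.minimalPeriod τ z :=
    Function.minimalPeriod_eq_minimalPeriod_iff.2 fun i => by
      rw [Function.IsPeriodicPt, Function.IsFixedPt, iterate_eq i]
      rfl
  rw [cycleWord, cycleWord, period_eq]
  refine List.ext_getElem (by simp) fun i _ _ => ?_
  rw [List.getElem_iterate, List.getElem_iterate, iterate_eq i]

end InsertBefore

section PermsOfFinset

variable {α : Type*} [DecidableEq α] {V : Finset α} {x : α}

theorem apply_eq_self_of_mem_permsOfFinset {τ : Perm α} (hτ : τ ∈ permsOfFinset V) (hx : x ∉ V) :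
    τ x = x :=
  not_imp_comm.1 (mem_perms_of_finset_iff.1 hτ) hx

theorem mem_of_sameCycle_of_mem_permsOfFinset {σ : Perm α} {z : α} (hσ : σ ∈ permsOfFinset V)
    (hx : x ∈ V) (h : σ.SameCycle x z) : z ∈ V := by
  by_contra hz
  exact hz (h.eq_of_right (apply_eq_self_of_mem_permsOfFinset hσ hz) ▸ hx)

theorem swap_mul_mem_permsOfFinset {y : α} {σ : Perm α} (hσ : σ ∈ permsOfFinset V) (hx : x ∈ V)
    (hy : y ∈ V) : swap x y * σ ∈ permsOfFinset V := by
  refine mem_perms_of_finset_iff.2 fun {z} hz => ?_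
  by_contra hzV
  refine hz ?_
  rw [Perm.mul_apply, apply_eq_self_of_mem_permsOfFinset hσ hzV,
    swap_apply_of_ne_of_ne (ne_of_mem_of_not_mem hx hzV).symm (ne_of_mem_of_not_mem hy hzV).symm]

theorem mem_permsOfFinset_erase {σ : Perm α} :
    σ ∈ permsOfFinset (V.erase x) ↔ σ ∈ permsOfFinset V ∧ σ x = x := by
  simp only [mem_perms_of_finset_iff, mem_erase]
  grind

theorem sum_permsOfFinset {M : Type*} [AddCommMonoid M] (hx : x ∈ V) (f : Perm α → M) :
    ∑ σ ∈ permsOfFinset V, f σ =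
      ∑ y ∈ V, ∑ τ ∈ permsOfFinset (V.erase x), f (swap x y * τ) := by
  rw [sum_sigma']
  symm
  refine sum_bij' (fun a _ => swap x a.1 * a.2) (fun σ _ => ⟨σ x, swap x (σ x) * σ⟩)
    ?_ ?_ ?_ ?_ fun _ _ => rfl
  · rintro ⟨y, τ⟩ h
    obtain ⟨hy, hτ⟩ := mem_sigma.1 h
    exact swap_mul_mem_permsOfFinset (mem_permsOfFinset_erase.1 hτ).1 hx hy
  · intro σ hσ
    have hσx := mem_of_sameCycle_of_mem_permsOfFinset hσ hx
      (Perm.sameCycle_apply_right.2 (.refl σ x))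
    exact mem_sigma.2 ⟨hσx, mem_permsOfFinset_erase.2
      ⟨swap_mul_mem_permsOfFinset hσ hx hσx, by simp⟩⟩
  · rintro ⟨y, τ⟩ h
    have hτ : τ x = x := (mem_permsOfFinset_erase.1 (mem_sigma.1 h).2).2
    simp [hτ]
  · intro σ _
    exact swap_mul_self_mul _ _ _

end PermsOfFinset

section IsOrbitMin

variable {n : ℕ} {σ : Perm (Fin n)} {x z : Fin n}

theorem isOrbitMin_iff_forall_sameCycle : IsOrbitMin σ x ↔ ∀ z, σ.SameCycle x z → x ≤ z := by
  simp only [sameCycle_iff_exists_iterate, Perm.iterate_eq_pow, forall_exists_index,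
    forall_apply_eq_imp_iff, IsOrbitMin]

theorem isOrbitMin_eq_of_sameCycle (hx : IsOrbitMin σ x) (hz : IsOrbitMin σ z)
    (h : σ.SameCycle x z) : x = z :=
  le_antisymm (isOrbitMin_iff_forall_sameCycle.1 hx z h)
    (isOrbitMin_iff_forall_sameCycle.1 hz x h.symm)

theorem isOrbitMin_of_isLeastBy {V : Finset (Fin n)} (hσ : σ ∈ permsOfFinset V)
    (hx : IsLeastBy (· < ·) V x) : IsOrbitMin σ x :=
  isOrbitMin_iff_forall_sameCycle.2 fun z h => by
    by_contra hzx
    have := hx.2 z (mem_of_sameCycle_of_mem_permsOfFinset hσ hx.1 h) (by omega)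
    omega

theorem isOrbitMin_swap_mul_iff {τ : Perm (Fin n)} {y : Fin n} (hx : τ x = x) (hzx : z ≠ x)
    (hyz : ¬ τ.SameCycle y z) : IsOrbitMin (swap x y * τ) z ↔ IsOrbitMin τ z := by
  simp only [isOrbitMin_iff_forall_sameCycle, ← mem_cycleWord,
    cycleWord_swap_mul_of_not_sameCycle hx hzx hyz]

theorem isCUD_iff_alternatesBy :
    IsCUD σ ↔ ∀ z, IsOrbitMin σ z → AlternatesBy (· < ·) (cycleWord σ z) := by
  simp only [alternatesBy_cycleWord_iff]
  rfl

end IsOrbitMin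

section CycleSum

variable {n : ℕ}

/-- The weight `X` of the cycle of `σ` starting at `z` if it is up-down, and `0` otherwise. -/
noncomputable def cycleWeight (σ : Perm (Fin n)) (z : Fin n) : ℕ[X] :=
  if AlternatesBy (· < ·) (cycleWord σ z) then X else 0

/-- The generating polynomial, by number of cycles, of the cycle-up-down permutations of `V`. -/
noncomputable def cycleSum (V : Finset (Fin n)) : ℕ[X] :=
  ∑ σ ∈ permsOfFinset V, ∏ z ∈ V with IsOrbitMin σ z, cycleWeight σ z

/-- The generating polynomial of the permutations of `V` whose cycle through `x`, read from `x` on,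
alternates by `r`, and whose other cycles are up-down; only the other cycles are counted. -/
noncomputable def pathSum (r : Fin n → Fin n → Prop) (V : Finset (Fin n)) (x : Fin n) : ℕ[X] :=
  ∑ σ ∈ permsOfFinset V with AlternatesBy r (cycleWord σ x),
    ∏ z ∈ V with ¬ σ.SameCycle x z ∧ IsOrbitMin σ z, cycleWeight σ z

variable {V : Finset (Fin n)} {x : Fin n}

theorem cycleSum_empty : cycleSum (∅ : Finset (Fin n)) = 1 := by
  simp only [cycleSum, filter_empty, prod_empty, sum_const, card_perms_of_finset, card_empty,
    Nat.factorial_zero, one_smul]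

theorem cycleSum_eq_X_mul_pathSum (hx : IsLeastBy (· < ·) V x) :
    cycleSum V = X * pathSum (· < ·) V x := by
  rw [cycleSum, pathSum, sum_filter, mul_sum]
  refine sum_congr rfl fun σ hσ => ?_
  have orbit_min : IsOrbitMin σ x := isOrbitMin_of_isLeastBy hσ hx
  have minima : {z ∈ V | IsOrbitMin σ z} =
      insert x {z ∈ V | ¬ σ.SameCycle x z ∧ IsOrbitMin σ z} := by
    ext z
    simp only [mem_insert, mem_filter]
    constructor
    · rintro ⟨hzV, hz⟩
      by_cases hxz : σ.SameCycle x z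
      · exact .inl (isOrbitMin_eq_of_sameCycle orbit_min hz hxz).symm
      · exact .inr ⟨hzV, hxz, hz⟩
    · rintro (rfl | ⟨hzV, -, hz⟩)
      · exact ⟨hx.1, orbit_min⟩
      · exact ⟨hzV, hz⟩
  rw [minima, prod_insert fun h => (mem_filter.1 h).2.1 .rfl, cycleWeight, ite_mul, zero_mul,
    mul_ite, mul_zero]

theorem prod_cycleWeight_swap_mul {τ : Perm (Fin n)} {y : Fin n} (hτ : τ x = x) (hyx : y ≠ x) :
    ∏ z ∈ V with ¬ (swap x y * τ).SameCycle x z ∧ IsOrbitMin (swap x y * τ) z,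
        cycleWeight (swap x y * τ) z =
      ∏ z ∈ V.erase x with ¬ τ.SameCycle y z ∧ IsOrbitMin τ z, cycleWeight τ z := by
  refine prod_congr ?_ ?_
  · ext z
    simp only [mem_filter, mem_erase, sameCycle_swap_mul hτ hyx, not_or]
    constructor
    · rintro ⟨hzV, ⟨hzx, hyz⟩, hz⟩
      exact ⟨⟨hzx, hzV⟩, hyz, (isOrbitMin_swap_mul_iff hτ hzx hyz).1 hz⟩
    · rintro ⟨⟨hzx, hzV⟩, hyz, hz⟩
      exact ⟨hzV, ⟨hzx, hyz⟩, (isOrbitMin_swap_mul_iff hτ hzx hyz).2 hz⟩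
  · intro z hz
    simp only [mem_filter, mem_erase] at hz
    rw [cycleWeight, cycleWord_swap_mul_of_not_sameCycle hτ hz.1.1 hz.2.1, cycleWeight]

theorem pathSum_eq_add_sum (r : Fin n → Fin n → Prop) (hx : x ∈ V) :
    pathSum r V x = cycleSum (V.erase x) +
      ∑ y ∈ V.erase x with r x y, pathSum (Function.swap r) (V.erase x) y := by
  rw [pathSum, sum_filter, sum_permsOfFinset hx, ← add_sum_erase _ _ hx, sum_filter]
  congr 1
  · refine sum_congr rfl fun τ hτ => ?_
    have hτx : τ x = x := (mem_permsOfFinset_erase.1 hτ).2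
    have others : {z ∈ V | ¬ τ.SameCycle x z ∧ IsOrbitMin τ z} =
        {z ∈ V.erase x | IsOrbitMin τ z} := by
      ext z
      simp only [mem_filter, mem_erase, sameCycle_iff_of_apply_eq hτx]
      tauto
    rw [swap_self, ← Perm.one_def, one_mul, cycleWord_of_apply_eq hτx, others,
      if_pos (by simp [AlternatesBy])]
  · refine sum_congr rfl fun y hy => ?_
    have hyx : y ≠ x := ne_of_mem_erase hy
    have term {τ : Perm (Fin n)} (hτ : τ ∈ permsOfFinset (V.erase x)) :
        AlternatesBy r (cycleWord (swap x y * τ) x) ↔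
          r x y ∧ AlternatesBy (Function.swap r) (cycleWord τ y) := by
      rw [cycleWord_swap_mul (mem_permsOfFinset_erase.1 hτ).2 hyx, AlternatesBy, head?_cycleWord]
      simp
    by_cases hxy : r x y
    · rw [if_pos hxy, pathSum, sum_filter]
      refine sum_congr rfl fun τ hτ => ?_
      rw [prod_cycleWeight_swap_mul (mem_permsOfFinset_erase.1 hτ).2 hyx]
      simp only [term hτ, hxy, true_and]
    · rw [if_neg hxy]
      refine sum_eq_zero fun τ hτ => ?_
      rw [if_neg fun h => hxy ((term hτ).1 h).1]

theorem pathSum_eq_entringerPoly (r : Fin n → Fin n → Prop) [IsStrictTotalOrder (Fin n) r] {m : ℕ}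
    (hm : #V = m + 1) (hx : x ∈ V) :
    pathSum r V x = entringerPoly m #{y ∈ V.erase x | r x y} := by
  induction m generalizing r V x with
  | zero =>
    have erase_eq : V.erase x = ∅ := card_eq_zero.1 (by rw [card_erase_of_mem hx, hm])
    rw [pathSum_eq_add_sum r hx, erase_eq, cycleSum_empty, filter_empty, sum_empty, add_zero,
      entringerPoly]
  | succ m ih =>
    have card_erase : #(V.erase x) = m + 1 := by rw [card_erase_of_mem hx, hm, Nat.add_sub_cancel]
    have closed_term : cycleSum (V.erase x) = X * entringerPoly m m := by
      obtain ⟨w, hw⟩ := exists_isLeastBy (· < ·) (card_pos.1 (by omega : 0 < #(V.erase x)))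
      rw [cycleSum_eq_X_mul_pathSum hw, ih _ card_erase hw.1, hw.card_filter_erase, card_erase,
        Nat.add_sub_cancel]
    have sum_term : ∑ y ∈ V.erase x with r x y, pathSum (Function.swap r) (V.erase x) y =
        ∑ i ∈ range #{y ∈ V.erase x | r x y}, entringerPoly m (m - i) := by
      rw [sum_congr rfl fun y hy => ih (Function.swap r) card_erase (mem_filter.1 hy).1,
        sum_card_filter_rel_erase (Function.swap r) _ fun y z hy hz => trans_of r hy hz,
        card_erase, Nat.add_sub_cancel]
    rw [pathSum_eq_add_sum r hx, closed_term, sum_term, entringerPoly]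

theorem cycleSum_eq_eulerPoly (V : Finset (Fin n)) : cycleSum V = eulerPoly #V := by
  cases hV : #V with
  | zero => rw [card_eq_zero.1 hV, cycleSum_empty, eulerPoly]
  | succ m =>
    obtain ⟨x, hx⟩ := exists_isLeastBy (· < ·) (card_pos.1 (by omega : 0 < #V))
    rw [cycleSum_eq_X_mul_pathSum hx, pathSum_eq_entringerPoly _ hV hx.1, hx.card_filter_erase, hV]
    rfl

theorem sum_X_pow_cycleCount (n : ℕ) :
    ∑ σ : Perm (Fin n) with IsCUD σ, (X : ℕ[X]) ^ cycleCount σ = eulerPoly n := by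
  have all_perms : permsOfFinset (univ : Finset (Fin n)) = univ :=
    eq_univ_of_forall fun σ => mem_perms_of_finset_iff.2 fun _ => mem_univ _
  calc
    _ = cycleSum (univ : Finset (Fin n)) := by
      rw [cycleSum, all_perms, sum_filter]
      refine sum_congr rfl fun σ _ => ?_
      simp only [cycleWeight, prod_ite_zero, prod_const, isCUD_iff_alternatesBy, mem_filter,
        mem_univ, true_and, cycleCount, Nat.card_eq_fintype_card, Fintype.card_subtype]
    _ = eulerPoly n := by rw [cycleSum_eq_eulerPoly, card_fin]

end CycleSum

end

/-- `extr` on up-down permutations of `[n+1]` vs. number of cycles on CUD of `[n]`. -/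
theorem stmt11 (n k : ℕ) (hn : 1 ≤ n) (hk : 1 ≤ k) :
    Nat.card {π : Equiv.Perm (Fin (n + 1)) // IsUpDownPerm π ∧ extrCount π = k} =
      Nat.card {σ : Equiv.Perm (Fin n) // IsCUD σ ∧ cycleCount σ = k} := by
  rw [← coeff_sum_X_pow, ← coeff_sum_X_pow, sum_X_pow_extrCount, sum_X_pow_cycleCount]
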